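/- Let ξ₁ < … < ξ_N be real numbers and, for j = 1, …, m, let g_j(t) = q_{1,j}·t + q_{0,j} + Σ_{ℓ=1}^{N} α_{j,ℓ}·σ(t − ξ_ℓ). Let f(t) = c·t + b + Σ_{j=1}^{m} a_j·σ(g_j(t)). Define μ_{j,ν} := q_{1,j} + Σ_{r=1}^{ν} α_{j,r} and η_{j,ν} := q_{0,j} − Σ_{r=1}^{ν} α_{j,r}·ξ_r for ν = 0, …, N, and set ξ₀ := −∞, ξ_{N+1} := +∞. Then for all t ∈ ℝ: f(t) = q₁·t + q₀ + Σ_{ℓ=1}^{N} β_ℓ·σ(t − ξ_ℓ) + Σ_{j=1}^{m} Σ_{ν ∈ S_j} a_j·|μ_{j,ν}|·σ(t + η_{j,ν}/μ_{j,ν}), where S_j := { ν ∈ {0, …, N} : μ_{j,ν} ≠ 0 and −η_{j,ν}/μ_{j,ν} ∈ (ξ_ν, ξ_{ν+1}) }, β_ℓ = Σ_{j=1}^{m} a_j·( α_{j,ℓ} if g_j(ξ_ℓ) > 0; σ(μ_{j,ℓ}) + σ(−μ_{j,ℓ−1}) if g_j(ξ_ℓ) = 0; 0 if g_j(ξ_ℓ)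 < 0 ), q₁ = c − Σ_{j=1}^{m} a_j·σ(−q_{1,j}), and q₀ = b + Σ_{j=1}^{m} a_j·( q_{0,j} if q_{1,j} < 0; σ(q_{0,j}) if q_{1,j} = 0; 0 if q_{1,j} > 0 ). -/

import Mathlib

/-- The ReLU function `σ(x) = max(x,0)`. -/
noncomputable def relu (x : ℝ) : ℝ := max x 0

lemma relu_pos_scale {p : ℝ} (hp : 0 < p) (e t : ℝ) :
    |p| * relu (t + e / p) = relu (p * t + e) := by
  unfold relu
  rw [abs_of_pos hp, mul_max_of_nonneg _ _ hp.le]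
  congr 1
  · field_simp
  · simp

lemma relu_neg_scale {p : ℝ} (hp : p < 0) (e t : ℝ) :
    |p| * relu (t + e / p) = relu (-(p * t + e)) := by
  have hne := hp.ne
  unfold relu
  rw [abs_of_neg hp, mul_max_of_nonneg _ _ (by linarith)]
  congr 1
  · field_simp
  · simp

lemma cond_pos {p : ℝ} (hp : 0 < p) (e x : ℝ) : x < -(e / p) ↔ p * x + e < 0 := by
  rw [← neg_div, lt_div_iff₀ hp]
  constructor <;> intro h <;> linarith

lemma cond_neg {p : ℝ} (hp : p < 0) (e x : ℝ) : x < -(e / p) ↔ 0 < p * x + e := by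
  rw [← neg_div, lt_div_iff_of_neg hp]
  constructor <;> intro h <;> linarith

lemma cond_pos_le {p : ℝ} (hp : 0 < p) (e x : ℝ) : x ≤ -(e / p) ↔ p * x + e ≤ 0 := by
  rw [← neg_div, le_div_iff₀ hp]
  constructor <;> intro h <;> linarith

lemma cond_neg_le {p : ℝ} (hp : p < 0) (e x : ℝ) : x ≤ -(e / p) ↔ 0 ≤ p * x + e := by
  rw [← neg_div, le_div_iff_of_neg hp]
  constructor <;> intro h <;> linarith

lemma relu_of_nonneg {x : ℝ} (h : 0 ≤ x) : relu x = x := max_eq_left h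
lemma relu_of_nonpos {x : ℝ} (h : x ≤ 0) : relu x = 0 := max_eq_right h

lemma relu_sub_neg (x : ℝ) : relu x - relu (-x) = x := by
  rcases le_total 0 x with h | h
  · rw [relu_of_nonneg h, relu_of_nonpos (by linarith)]; ring
  · rw [relu_of_nonpos h, relu_of_nonneg (by linarith)]; ring

/-- right representation, strict condition -/
lemma rep_strict (p e x t : ℝ) (ht : x < t) :
    relu (p * t + e) =
      (if 0 < p * x + e then p * t + e else if p * x + e = 0 then relu p * (t - x) else 0)
      + (if p ≠ 0 ∧ x < -(e / p) then |p| * relu (t + e / p) else 0) := by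
  rcases lt_trichotomy p 0 with hp | hp | hp
  · rw [relu_neg_scale hp]; simp only [cond_neg hp]
    have h1 := relu_sub_neg (p * t + e)
    have h2 : p * t < p * x := by nlinarith
    rcases lt_trichotomy (p * x + e) 0 with h | h | h
    · simp [h.not_gt, h.ne, relu_of_nonpos (show p * t + e ≤ 0 by linarith)]
    · simp [h, relu_of_nonpos hp.le, relu_of_nonpos (show p * t + e ≤ 0 by linarith)]
    · simp only [h, hp.ne, ne_eq, not_false_eq_true, and_self, if_true]; linarith
  · subst hp
    rcases lt_trichotomy e 0 with h | h | h
    · simp [h.not_gt, h.ne, relu_of_nonpos h.le]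
    · simp [h, relu]
    · simp [h, relu_of_nonneg h.le]
  · rw [relu_pos_scale hp]; simp only [cond_pos hp]
    have h2 : p * x < p * t := by nlinarith
    rcases lt_trichotomy (p * x + e) 0 with h | h | h
    · simp [h, h.not_gt, h.ne, hp.ne']
    · have : e = - (p * x) := by linarith
      simp [h, relu_of_nonneg hp.le, relu_of_nonneg (show 0 ≤ p * t + e by linarith)]
      linarith
    · simp [h, h.not_gt, relu_of_nonneg (show 0 ≤ p * t + e by linarith)]

/-- left representation, nonstrict condition -/
lemma rep_le (p e x t : ℝ) (ht : x < t) :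
    relu (p * t + e) =
      (if 0 < p * x + e then p * t + e else if p * x + e = 0 then -relu (-p) * (t - x) else 0)
      + (if p ≠ 0 ∧ x ≤ -(e / p) then |p| * relu (t + e / p) else 0) := by
  rcases lt_trichotomy p 0 with hp | hp | hp
  · rw [relu_neg_scale hp]; simp only [cond_neg_le hp]
    have h1 := relu_sub_neg (p * t + e)
    have h2 : p * t < p * x := by nlinarith
    rcases lt_trichotomy (p * x + e) 0 with h | h | h
    · simp [h.not_gt, h.not_ge, h.ne, relu_of_nonpos (show p * t + e ≤ 0 by linarith)]
    · have : e = - (p * x) := by linarith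
      rw [relu_of_nonneg (show 0 ≤ -p by linarith), relu_of_nonpos (show p * t + e ≤ 0 by linarith),
        relu_of_nonneg (show 0 ≤ -(p * t + e) by linarith)]
      simp [h, hp.ne]
      linarith
    · simp only [h, h.le, hp.ne, ne_eq, not_false_eq_true, and_self, if_true]; linarith
  · subst hp
    rcases lt_trichotomy e 0 with h | h | h
    · simp [h.not_gt, h.ne, relu_of_nonpos h.le]
    · simp [h, relu]
    · simp [h, relu_of_nonneg h.le]
  · rw [relu_pos_scale hp]; simp only [cond_pos_le hp]
    have h2 : p * x < p * t := by nlinarith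
    rcases lt_trichotomy (p * x + e) 0 with h | h | h
    · simp [h.le, h.not_gt, h.ne, hp.ne']
    · simp [h, hp.ne', relu_of_nonpos (show -p ≤ 0 by linarith)]
    · simp [h, h.not_ge, relu_of_nonneg (show 0 ≤ p * t + e by linarith)]

lemma base_rep (p e t : ℝ) :
    relu (p * t + e) = -relu (-p) * t
      + (if p < 0 then e else if p = 0 then relu e else 0)
      + (if p ≠ 0 then |p| * relu (t + e / p) else 0) := by
  rcases lt_trichotomy p 0 with hp | hp | hp
  · rw [relu_neg_scale hp, relu_of_nonneg (show 0 ≤ -p by linarith)]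
    have h1 := relu_sub_neg (p * t + e)
    simp only [hp, hp.ne, ne_eq, not_false_eq_true, if_true]; linarith
  · subst hp; simp [relu]
  · rw [relu_pos_scale hp, relu_of_nonpos (show -p ≤ 0 by linarith)]
    simp [hp.not_gt, hp.ne']

section core
open Finset

lemma single (N : ℕ) (x A μ η : ℕ → ℝ) (X : ℕ → EReal)
    (hx : ∀ r k, r < k → k < N → x r < x k)
    (hμ : ∀ k, k < N → μ (k + 1) = μ k + A k)
    (hη : ∀ k, k < N → η (k + 1) = η k - A k * x k)
    (hX0 : X 0 = ⊥) (hXmid : ∀ k, k < N → X (k + 1) = (x k : ℝ)) (hXtop : X (N + 1) = ⊤)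
    (g : ℝ → ℝ) (hg : ∀ t, g t = μ 0 * t + η 0 + ∑ r ∈ range N, A r * relu (t - x r))
    (S : Finset ℕ)
    (hS : ∀ ν, ν ∈ S ↔ ν ≤ N ∧ μ ν ≠ 0 ∧
      X ν < ((-(η ν / μ ν) : ℝ) : EReal) ∧ ((-(η ν / μ ν) : ℝ) : EReal) < X (ν + 1)) (t : ℝ) :
    relu (g t) = -relu (-(μ 0)) * t
      + (if μ 0 < 0 then η 0 else if μ 0 = 0 then relu (η 0) else 0)
      + ∑ k ∈ range N, (if 0 < g (x k) then A k
            else if g (x k) = 0 then relu (μ (k + 1)) + relu (-(μ k)) else 0) * relu (t - x k)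
      + ∑ ν ∈ S, |μ ν| * relu (t + η ν / μ ν) := by
  classical
  -- affine pieces
  have haff : ∀ k, k ≤ N → ∀ s, (∀ r, r < k → x r ≤ s) →
      μ 0 * s + η 0 + ∑ r ∈ range k, A r * relu (s - x r) = μ k * s + η k := by
    intro k
    induction k with
    | zero => intro _ s _; simp
    | succ k ih =>
      intro hk s hs
      have := ih (by omega) s (fun r hr => hs r (by omega))
      rw [sum_range_succ, relu_of_nonneg (by linarith [hs k (by omega)]), hμ k (by omega),
        hη k (by omega)]
      linarith
  have hgx : ∀ k, k < N → g (x k) = μ k * x k + η k := by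
    intro k hk
    rw [hg, ← haff k hk.le (x k) (fun r hr => (hx r k hr hk).le)]
    congr 1
    symm
    apply sum_subset
    · intro r hr; simp at hr ⊢; omega
    · intro r hr hr'
      simp at hr hr'
      have : x k ≤ x r := by
        rcases hr'.eq_or_lt with h | h
        · rw [h]
        · exact (hx k r h hr).le
      rw [relu_of_nonpos (by linarith), mul_zero]
  have key : ∀ k, k ≤ N →
      relu (μ 0 * t + η 0 + ∑ r ∈ range k, A r * relu (t - x r)) = -relu (-(μ 0)) * t
      + (if μ 0 < 0 then η 0 else if μ 0 = 0 then relu (η 0) else 0)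
      + ∑ k ∈ range k, (if 0 < g (x k) then A k
            else if g (x k) = 0 then relu (μ (k + 1)) + relu (-(μ k)) else 0) * relu (t - x k)
      + ∑ ν ∈ range k, (if ν ∈ S then |μ ν| * relu (t + η ν / μ ν) else 0)
      + (if μ k ≠ 0 ∧ X k < ((-(η k / μ k) : ℝ) : EReal) then
          |μ k| * relu (t + η k / μ k) else 0) := by
    intro k
    induction k with
    | zero =>
      intro _
      have := base_rep (μ 0) (η 0) t
      simp only [range_zero, sum_empty, add_zero, hX0, EReal.bot_lt_coe, and_true]
      exact this
    | succ k ih =>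
      intro hk
      have hkN : k < N := by omega
      have ih := ih hkN.le
      -- combine the term and the tail
      have hT : (if k ∈ S then |μ k| * relu (t + η k / μ k) else 0) =
          (if μ k ≠ 0 ∧ X k < ((-(η k / μ k) : ℝ) : EReal) then
            |μ k| * relu (t + η k / μ k) else 0)
          - (if μ k ≠ 0 ∧ x k ≤ -(η k / μ k) then |μ k| * relu (t + η k / μ k) else 0) := by
        have hXk : X k < ((x k : ℝ) : EReal) := by
          cases k with
          | zero => rw [hX0]; exact EReal.bot_lt_coe _
          | succ i => rw [hXmid i (by omega)]; exact_mod_cast hx i (i + 1) (by omega) hkN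
        have hS' := hS k
        rw [hXmid k hkN, EReal.coe_lt_coe_iff] at hS'
        by_cases h0 : μ k = 0
        · have : k ∉ S := by rw [hS']; tauto
          simp [this, h0]
        by_cases h1 : x k ≤ -(η k / μ k)
        · have : k ∉ S := by rw [hS']; intro h; linarith [h.2.2.2]
          have h2 : X k < ((-(η k / μ k) : ℝ) : EReal) :=
            lt_of_lt_of_le hXk (by exact_mod_cast h1)
          rw [if_neg this, if_pos ⟨h0, h2⟩, if_pos ⟨h0, h1⟩, sub_self]
        · rw [if_neg (show ¬ (μ k ≠ 0 ∧ x k ≤ -(η k / μ k)) from fun h => h1 h.2), sub_zero]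
          congr 1
          rw [hS']
          apply propext
          constructor
          · intro h; exact ⟨h.2.1, h.2.2.1⟩
          · intro h; exact ⟨hkN.le, h.1, h.2, not_le.mp h1⟩
      rw [sum_range_succ _ k, sum_range_succ _ k, sum_range_succ _ k, hT, hXmid k hkN]
      simp only [EReal.coe_lt_coe_iff]
      rcases le_or_gt t (x k) with ht | ht
      · have e1 : (if μ k ≠ 0 ∧ x k ≤ -(η k / μ k) then |μ k| * relu (t + η k / μ k) else 0)
            = 0 := by
          split_ifs with h
          · rw [relu_of_nonpos (by linarith [h.2]), mul_zero]
          · rfl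
        have e2 : (if μ (k+1) ≠ 0 ∧ x k < -(η (k+1) / μ (k+1)) then
            |μ (k+1)| * relu (t + η (k+1) / μ (k+1)) else 0) = 0 := by
          split_ifs with h
          · rw [relu_of_nonpos (by linarith [h.2]), mul_zero]
          · rfl
        rw [e1, e2, relu_of_nonpos (show t - x k ≤ 0 by linarith), mul_zero, mul_zero, add_zero, ih]
        ring
      · have hr : ∀ r, r < k → x r ≤ t := fun r hr => ((hx r k hr hkN).trans ht).le
        have hr' : ∀ r, r < k + 1 → x r ≤ t := by
          intro r h
          rcases Nat.lt_succ_iff_lt_or_eq.mp h with h | h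
          · exact hr r h
          · rw [h]; exact ht.le
        have a2 := haff (k + 1) hk t hr'
        rw [sum_range_succ] at a2
        rw [haff k hkN.le t hr, rep_le _ _ _ _ ht] at ih
        rw [a2, rep_strict _ _ (x k) t ht]
        have hv : μ (k+1) * x k + η (k+1) = μ k * x k + η k := by
          rw [hμ k hkN, hη k hkN]; ring
        have hA : μ (k+1) * t + η (k+1) = μ k * t + η k + A k * (t - x k) := by
          rw [hμ k hkN, hη k hkN]; ring
        rw [hv, hgx k hkN, relu_of_nonneg (show 0 ≤ t - x k by linarith), hA]
        rcases lt_trichotomy (μ k * x k + η k) 0 with h | h | h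
        · simp only [h.not_gt, h.ne, if_false] at ih ⊢
          linarith
        · simp only [h, lt_irrefl, if_false, if_true] at ih ⊢
          linarith
        · simp only [h, if_true] at ih ⊢
          linarith
  have hfin := key N le_rfl
  rw [← hg] at hfin
  rw [hfin, add_assoc]
  congr 1
  have hlast : (if μ N ≠ 0 ∧ X N < ((-(η N / μ N) : ℝ) : EReal) then
          |μ N| * relu (t + η N / μ N) else 0) =
      (if N ∈ S then |μ N| * relu (t + η N / μ N) else 0) := by
    congr 1
    rw [hS, hXtop]
    simp only [EReal.coe_lt_top, le_refl, true_and, and_true]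
  rw [hlast, ← sum_range_succ (fun ν => if ν ∈ S then |μ ν| * relu (t + η ν / μ ν) else 0),
    ← sum_filter]
  congr 1
  ext ν
  simp only [mem_filter, mem_range]
  constructor
  · exact fun h => h.2
  · exact fun h => ⟨by have := ((hS ν).1 h).1; omega, h⟩

end core

/-- one recursion step (Corollary 4.2 of the paper): if
`f(t) = c·t + b + Σ_j a_j σ(g_j(t))` where each `g_j` is a CPL spline with common knots
`ξ₁ < … < ξ_N`, then `f` is a CPL spline whose knots are the `ξ_ℓ` together with the
singular zeros of the `g_j`.  The Lean index `ℓ : Fin N` corresponds to the paper's knot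
`ξ_{ℓ+1}`; `μ j ν`, `η j ν` (for `ν = 0,…,N`) are the slope and offset of `g_j` on
`(ξ_ν, ξ_{ν+1})`; `X : ℕ → EReal` extends the knots by `X 0 = −∞`, `X (N+1) = +∞`; and
`S j` is the set of indices `ν` with `μ_{j,ν} ≠ 0` and `−η_{j,ν}/μ_{j,ν} ∈ (ξ_ν, ξ_{ν+1})`. -/
theorem recursion_step (N m : ℕ)
    (ξ : Fin N → ℝ) (hξ : StrictMono ξ)
    (q1j q0j : Fin m → ℝ) (α : Fin m → Fin N → ℝ)
    (g : Fin m → ℝ → ℝ)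
    (hg : ∀ j t, g j t = q1j j * t + q0j j + ∑ ℓ, α j ℓ * relu (t - ξ ℓ))
    (a : Fin m → ℝ) (c b : ℝ)
    (f : ℝ → ℝ)
    (hf : ∀ t, f t = c * t + b + ∑ j, a j * relu (g j t))
    (μ η : Fin m → ℕ → ℝ)
    (hμ : ∀ j ν, μ j ν = q1j j + ∑ r : Fin N, if (r : ℕ) < ν then α j r else 0)
    (hη : ∀ j ν, η j ν = q0j j - ∑ r : Fin N, if (r : ℕ) < ν then α j r * ξ r else 0)
    (X : ℕ → EReal)
    (hX0 : X 0 = ⊥)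
    (hXmid : ∀ ℓ : Fin N, X ((ℓ : ℕ) + 1) = (ξ ℓ : ℝ))
    (hXtop : X (N + 1) = ⊤)
    (S : Fin m → Finset ℕ)
    (hS : ∀ j ν, ν ∈ S j ↔ ν ≤ N ∧ μ j ν ≠ 0 ∧
      X ν < ((-(η j ν / μ j ν) : ℝ) : EReal) ∧
      ((-(η j ν / μ j ν) : ℝ) : EReal) < X (ν + 1)) :
    ∀ t, f t =
      (c - ∑ j, a j * relu (-(q1j j))) * t
      + (b + ∑ j, a j *
          (if q1j j < 0 then q0j j else if q1j j = 0 then relu (q0j j) else 0))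
      + (∑ ℓ : Fin N,
          (∑ j, a j * (if 0 < g j (ξ ℓ) then α j ℓ
            else if g j (ξ ℓ) = 0 then relu (μ j ((ℓ : ℕ) + 1)) + relu (-(μ j (ℓ : ℕ)))
            else 0)) * relu (t - ξ ℓ))
      + ∑ j, ∑ ν ∈ S j, a j * |μ j ν| * relu (t + η j ν / μ j ν) := by
  intro t
  have hone : ∀ j, relu (g j t) = -relu (-(q1j j)) * t
      + (if q1j j < 0 then q0j j else if q1j j = 0 then relu (q0j j) else 0)
      + ∑ ℓ : Fin N, (if 0 < g j (ξ ℓ) then α j ℓ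
            else if g j (ξ ℓ) = 0 then relu (μ j ((ℓ : ℕ) + 1)) + relu (-(μ j (ℓ : ℕ)))
            else 0) * relu (t - ξ ℓ)
      + ∑ ν ∈ S j, |μ j ν| * relu (t + η j ν / μ j ν) := by
    intro j
    have m0 : μ j 0 = q1j j := by simp [hμ]
    have e0 : η j 0 = q0j j := by simp [hη]
    have aux : ∀ (F : Fin N → ℝ) (k : ℕ) (hk : k < N),
        (∑ r : Fin N, if (r : ℕ) < k + 1 then F r else 0)
          = (∑ r : Fin N, if (r : ℕ) < k then F r else 0) + F ⟨k, hk⟩ := by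
      intro F k hk
      have : F ⟨k, hk⟩ = ∑ r : Fin N, if r = ⟨k, hk⟩ then F r else 0 := by simp
      rw [this, ← Finset.sum_add_distrib]
      apply Finset.sum_congr rfl
      intro r _
      rcases lt_trichotomy (r : ℕ) k with h | h | h
      · simp [h, Fin.ext_iff, h.ne, Nat.lt_succ_of_lt h]
      · simp [h, Fin.ext_iff]
      · simp [h.not_gt, Fin.ext_iff, h.ne', show ¬ (r : ℕ) < k + 1 by omega]
    have := single N (fun k => if h : k < N then ξ ⟨k, h⟩ else 0)
      (fun k => if h : k < N then α j ⟨k, h⟩ else 0) (μ j) (η j) X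
      (by
        intro r k hrk hk
        simp only [hk, hrk.trans hk, dif_pos]
        exact hξ hrk)
      (by
        intro k hk
        simp only [hk, dif_pos]
        rw [hμ, hμ, aux (α j) k hk]; ring)
      (by
        intro k hk
        simp only [hk, dif_pos]
        rw [hη, hη, aux (fun r => α j r * ξ r) k hk]; ring)
      hX0
      (by
        intro k hk
        simp only [hk, dif_pos]
        exact hXmid ⟨k, hk⟩)
      hXtop (g j)
      (by
        intro s
        rw [hg, m0, e0, Finset.sum_range]
        simp)
      (S j) (hS j) t
    rw [this, m0, e0, Finset.sum_range]
    simp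
  rw [hf]
  simp only [hone]
  simp only [Finset.sum_mul, sub_mul, mul_add, Finset.sum_add_distrib, Finset.mul_sum]
  rw [Finset.sum_comm (s := (Finset.univ : Finset (Fin N)))]
  simp only [mul_assoc, neg_mul, mul_neg, Finset.sum_neg_distrib]
  ring
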